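/- For every natural number n that is either 0 or even with n ≥ 4, and every z ∈ ℂ, Ĥ_n(z) = M₂(n)·μ_n(z), where M₂(n) = (−1)^{(n+2)/2}·n!·2^{n/2} / (n·(n−1)(n−2)·∏_{j=1}^{(n−4)/2}(n − 2(1+j))) for n ≥ 4 and M₂(0) = 1. -/

import Mathlib

/-- Physicists' Hermite polynomials via the Rodrigues formula (complex version). -/
noncomputable def Hc (n : ℕ) (z : ℂ) : ℂ :=
  (-1) ^ n * Complex.exp (z ^ 2) * iteratedDeriv n (fun t => Complex.exp (-t ^ 2)) z

/-- The function Ĥₙ. -/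
noncomputable def Hhatc (n : ℕ) (z : ℂ) : ℂ :=
  Hc n z + 4 * (n : ℂ) * Hc (n - 2) z + 4 * (n : ℂ) * ((n : ℂ) - 3) * Hc (n - 4) z

/-- Even coefficients c_{2k}(n) of the generalized power series. -/
noncomputable def ceven (n k : ℕ) : ℂ :=
  if k = 0 then 1
  else if k = 1 then -(n : ℂ)
  else (-1) ^ k * 2 ^ k * (n : ℂ) * ((n : ℂ) - ((2 * (k : ℂ) - 1) ^ 2 + 1)) *
    (∏ j ∈ Finset.Icc 1 (k - 2), ((n : ℂ) - 2 * (1 + (j : ℂ)))) /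
      (Nat.factorial (2 * k) : ℂ)

/-- Odd coefficients: `codd n k` is c_{2k-1}(n), for k ≥ 1. -/
noncomputable def codd (n k : ℕ) : ℂ :=
  if k ≤ 1 then 1
  else (-1) ^ (k + 1) * 2 ^ (k - 1) * ((n : ℂ) - ((2 * ((k : ℂ) - 1)) ^ 2 + 1)) *
    (∏ j ∈ Finset.Icc 1 (k - 2), ((n : ℂ) - (2 * (1 + (j : ℂ)) - 1))) /
      (Nat.factorial (2 * k - 1) : ℂ)

/-- μₙ(z) = Σ_{k≥0} c_{2k}(n)·z^{2k}. -/
noncomputable def muF (n : ℕ) (z : ℂ) : ℂ := ∑' k : ℕ, ceven n k * z ^ (2 * k)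

/-- νₙ(z) = Σ_{k≥1} c_{2k-1}(n)·z^{2k-1}. -/
noncomputable def nuF (n : ℕ) (z : ℂ) : ℂ := ∑' k : ℕ, codd n (k + 1) * z ^ (2 * k + 1)

/-- βₙ = μₙ + νₙ. -/
noncomputable def betaF (n : ℕ) (z : ℂ) : ℂ := muF n z + nuF n z

/-- The proportionality constant M₂(n). -/
noncomputable def M2 (n : ℕ) : ℂ :=
  if n = 0 then 1
  else (-1) ^ ((n + 2) / 2) * (Nat.factorial n : ℂ) * 2 ^ (n / 2) /
    ((n : ℂ) * ((n : ℂ) - 1) * ((n : ℂ) - 2) *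
      ∏ j ∈ Finset.Icc 1 ((n - 4) / 2), ((n : ℂ) - 2 * (1 + (j : ℂ))))

/-!
Write `θ = X d/dX` and let `Hₙ` be the Hermite polynomial. The identity
`(θ - n) Hₙ = 2n(n - 1) Hₙ₋₂`, applied twice, expresses `Ĥₙ` through `Hₙ` alone:
`(n - 1)(n - 2) Ĥₙ = ((θ - 1)² + 1 - n) Hₙ`. The Hermite equation `Hₙ'' = 2 (θ - n) Hₙ` gives
`(2k)! [X²ᵏ] Hₙ = (-2)ᵏ n(n - 2)⋯(n - 2k + 2) Hₙ(0)`, and the eigenvalue `(2k - 1)² + 1 - n` of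
`(θ - 1)² + 1 - n` on `X²ᵏ` is minus the quadratic factor of `c₂ₖ(n)`. Hence
`Ĥₙ = -Hₙ(0) / (n - 1) · μₙ` for every even `n ≠ 2`, and `M₂(n)` is this constant.
-/

open Finset Polynomial

section EvenFallingProduct

variable {R : Type*} [CommRing R]

lemma prod_range_add_two_sub_two_mul (x : R) (k : ℕ) :
    ∏ i ∈ range (k + 2), (x - 2 * (i : R)) =
      x * (x - 2) * ∏ j ∈ Icc 1 k, (x - 2 * (1 + (j : R))) := by
  induction k with
  | zero => simp [prod_range_succ]
  | succ k ih =>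
    rw [prod_range_succ, ih, prod_Icc_succ_top (by omega)]
    push_cast
    ring

lemma prod_range_two_mul_sub_two_mul (m : ℕ) :
    ∏ i ∈ range m, (2 * (m : R) - 2 * (i : R)) = 2 ^ m * (m.factorial : R) := by
  induction m with
  | zero => simp
  | succ m ih =>
    rw [prod_range_succ', Nat.factorial_succ]
    push_cast
    simp only [mul_add, add_sub_add_right_eq_sub, ih]
    ring

end EvenFallingProduct

lemma coeff_X_mul_derivative {R : Type*} [Semiring R] (p : R[X]) (j : ℕ) :
    (X * derivative p).coeff j = (j : R) * p.coeff j := by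
  rcases j with _ | j
  · simp
  · rw [coeff_X_mul, coeff_derivative, ← Nat.cast_add_one, Nat.cast_comm]

lemma eval_eq_tsum_coeff_two_mul {R : Type*} [Semiring R] [TopologicalSpace R] {p : R[X]}
    (hp : ∀ j, Odd j → p.coeff j = 0) (x : R) :
    p.eval x = ∑' k : ℕ, p.coeff (2 * k) * x ^ (2 * k) := by
  have eval_eq_tsum : p.eval x = ∑' j : ℕ, p.coeff j * x ^ j := by
    rw [eval_eq_sum, sum_def, tsum_eq_sum]
    intro j hj
    rw [notMem_support_iff.mp hj, zero_mul]
  have support_subset : (Function.support fun j ↦ p.coeff j * x ^ j) ⊆ Set.range (2 * ·) := by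
    intro j hj
    have hodd : ¬Odd j := fun h ↦ hj (by simp only [hp j h, zero_mul])
    exact (even_iff_exists_two_mul.mp (Nat.not_odd_iff_even.mp hodd)).imp fun _ h ↦ h.symm
  rw [eval_eq_tsum, ← (mul_right_injective₀ two_ne_zero).tsum_eq support_subset]

/-- The physicists' Hermite polynomials `Hₙ` over a commutative ring, generated by the recurrence
`Hₙ₊₁ = 2 X Hₙ - Hₙ'`; over `ℂ` their values are the functions `Hc`. -/
noncomputable def physHermite (R : Type*) [CommRing R] : ℕ → R[X]
  | 0 => 1
  | n + 1 => 2 * X * physHermite R n - derivative (physHermite R n)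

/-- The polynomial `Ĥₙ` over a commutative ring; over `ℂ` its values are the function `Hhatc`. The
truncated subtraction in the indices changes the value only for `n = 1` and `n = 2`. -/
noncomputable def hatHermite (R : Type*) [CommRing R] (n : ℕ) : R[X] :=
  physHermite R n + 4 * (n : R[X]) * physHermite R (n - 2) +
    4 * (n : R[X]) * ((n : R[X]) - 3) * physHermite R (n - 4)

section Coefficients

variable {R : Type*} [CommRing R]

lemma physHermite_zero : physHermite R 0 = 1 := rfl

lemma physHermite_succ (n : ℕ) :
    physHermite R (n + 1) = 2 * X * physHermite R n - derivative (physHermite R n) := rfl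

lemma derivative_physHermite (n : ℕ) :
    derivative (physHermite R n) = 2 * (n : R[X]) * physHermite R (n - 1) := by
  induction n with
  | zero => simp [physHermite_zero]
  | succ n ih =>
    have second_derivative : derivative (derivative (physHermite R n)) =
        2 * (n : R[X]) * derivative (physHermite R (n - 1)) := by
      rw [ih]; simp [derivative_mul]
    rw [physHermite_succ, derivative_sub, second_derivative, derivative_mul, ih]
    rcases n with _ | n
    · simp [physHermite_zero]
    · rw [Nat.add_sub_cancel, Nat.add_sub_cancel, physHermite_succ]
      simp only [derivative_mul, derivative_X, derivative_ofNat]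
      push_cast
      ring

lemma X_mul_derivative_physHermite (n : ℕ) :
    X * derivative (physHermite R n) =
      (n : R[X]) * physHermite R n + 2 * (n : R[X]) * ((n : R[X]) - 1) * physHermite R (n - 2) := by
  rcases n with _ | n
  · simp [physHermite_zero]
  · rw [derivative_physHermite, physHermite_succ, derivative_physHermite]
    simp only [Nat.add_sub_cancel, Nat.reduceSubDiff, Nat.cast_add_one]
    ring

lemma derivative_derivative_physHermite (n : ℕ) :
    derivative (derivative (physHermite R n)) =
      2 * X * derivative (physHermite R n) - 2 * (n : R[X]) * physHermite R n := by
  have h : derivative (physHermite R (n + 1)) = 2 * ((n : R[X]) + 1) * physHermite R n := by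
    simpa using derivative_physHermite (R := R) (n + 1)
  rw [physHermite_succ, derivative_sub, derivative_mul, derivative_mul, derivative_X,
    derivative_ofNat] at h
  linear_combination -h

lemma coeff_physHermite_eq_zero_of_odd_add {n j : ℕ} (h : Odd (n + j)) :
    (physHermite R n).coeff j = 0 := by
  induction n generalizing j with
  | zero => simp [physHermite_zero, coeff_one, show j ≠ 0 by rintro rfl; simp at h]
  | succ n ih =>
    have coeff_derivative_eq_zero : (physHermite R n).coeff (j + 1) = 0 := ih (by grind)
    rw [physHermite_succ, mul_assoc, coeff_sub, coeff_derivative, coeff_derivative_eq_zero,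
      coeff_ofNat_mul]
    rcases j with _ | j
    · simp
    · rw [coeff_X_mul, ih (by grind)]
      simp

lemma sub_mul_coeff_physHermite (n j : ℕ) :
    ((j : R) - n) * (physHermite R n).coeff j =
      2 * (n : R) * ((n : R) - 1) * (physHermite R (n - 2)).coeff j := by
  have h := congrArg (coeff · j) (X_mul_derivative_physHermite (R := R) n)
  simp only [coeff_X_mul_derivative, coeff_add, mul_assoc, sub_mul, one_mul, coeff_sub,
    coeff_ofNat_mul, coeff_natCast_mul] at h
  linear_combination h

lemma mul_coeff_physHermite_add_two (n j : ℕ) :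
    ((j : R) + 2) * ((j : R) + 1) * (physHermite R n).coeff (j + 2) =
      2 * ((j : R) - n) * (physHermite R n).coeff j := by
  have h := congrArg (coeff · j) (derivative_derivative_physHermite (R := R) n)
  simp only [coeff_derivative, coeff_sub, mul_assoc, coeff_ofNat_mul, coeff_natCast_mul,
    coeff_X_mul_derivative] at h
  push_cast at h
  linear_combination h

lemma factorial_mul_coeff_physHermite_two_mul (n k : ℕ) :
    ((2 * k).factorial : R) * (physHermite R n).coeff (2 * k) =
      (-2) ^ k * (∏ i ∈ range k, ((n : R) - 2 * i)) * (physHermite R n).coeff 0 := by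
  induction k with
  | zero => simp
  | succ k ih =>
    have step := mul_coeff_physHermite_add_two (R := R) n (2 * k)
    rw [mul_add_one, Nat.factorial_succ, Nat.factorial_succ, prod_range_succ]
    push_cast at step ⊢
    linear_combination ((2 * k).factorial : R) * step - 2 * ((n : R) - 2 * k) * ih

lemma factorial_mul_coeff_zero_physHermite_two_mul (m : ℕ) :
    (m.factorial : R) * (physHermite R (2 * m)).coeff 0 = (-1) ^ m * ((2 * m).factorial : R) := by
  induction m with
  | zero => simp [physHermite_zero]
  | succ m ih =>
    have step : (physHermite R (2 * m + 2)).coeff 0 =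
        -(2 * (2 * (m : R) + 1) * (physHermite R (2 * m)).coeff 0) := by
      rw [physHermite_succ, derivative_physHermite, coeff_sub, mul_assoc, mul_assoc,
        coeff_ofNat_mul, coeff_ofNat_mul, coeff_X_mul_zero, coeff_natCast_mul, Nat.add_sub_cancel]
      push_cast
      ring
    rw [mul_add_one, step, Nat.factorial_succ, Nat.factorial_succ, Nat.factorial_succ]
    push_cast
    linear_combination -((m : R) + 1) * (2 * (2 * (m : R) + 1)) * ih

lemma coeff_hatHermite (n j : ℕ) :
    (hatHermite R n).coeff j = (physHermite R n).coeff j +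
      4 * (n : R) * (physHermite R (n - 2)).coeff j +
      4 * (n : R) * ((n : R) - 3) * (physHermite R (n - 4)).coeff j := by
  simp only [hatHermite, coeff_add, mul_assoc, sub_mul, coeff_sub, coeff_ofNat_mul,
    coeff_natCast_mul]

lemma coeff_hatHermite_eq_zero_of_even_of_odd {n j : ℕ} (hn : Even n) (hj : Odd j) :
    (hatHermite R n).coeff j = 0 := by
  rw [coeff_hatHermite, coeff_physHermite_eq_zero_of_odd_add (by grind),
    coeff_physHermite_eq_zero_of_odd_add (by grind),
    coeff_physHermite_eq_zero_of_odd_add (by grind)]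
  simp

lemma mul_coeff_hatHermite (n j : ℕ) :
    ((n : R) - 1) * ((n : R) - 2) * (hatHermite R n).coeff j =
      (((j : R) - 1) ^ 2 + 1 - n) * (physHermite R n).coeff j := by
  have lower := sub_mul_coeff_physHermite (R := R) n j
  rw [coeff_hatHermite]
  rcases n with _ | _ | n
  · push_cast at lower ⊢
    linear_combination (2 - (j : R)) * lower
  · push_cast at lower ⊢
    linear_combination (1 - (j : R)) * lower
  · have lower_twice := sub_mul_coeff_physHermite (R := R) n j
    simp only [Nat.reduceSubDiff] at lower ⊢
    push_cast at lower ⊢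
    linear_combination (-(2 * (n : R) + ((j : R) - n))) * lower -
      2 * ((n : R) + 2) * ((n : R) + 1) * lower_twice

end Coefficients

section Rodrigues

lemma iteratedDeriv_cexp_neg_sq (n : ℕ) :
    iteratedDeriv n (fun t : ℂ ↦ Complex.exp (-t ^ 2)) =
      fun z ↦ (-1) ^ n * (physHermite ℂ n).eval z * Complex.exp (-z ^ 2) := by
  induction n with
  | zero => simp [physHermite_zero]
  | succ n ih =>
    funext z
    have gaussian_deriv : HasDerivAt (fun t : ℂ ↦ Complex.exp (-t ^ 2))
        (Complex.exp (-z ^ 2) * (-(2 * z))) z := by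
      simpa using (hasDerivAt_pow 2 z).neg.cexp
    have product_deriv :=
      (((physHermite ℂ n).hasDerivAt z).const_mul ((-1 : ℂ) ^ n)).mul gaussian_deriv
    rw [iteratedDeriv_succ, ih]
    refine product_deriv.deriv.trans ?_
    simp only [physHermite_succ, eval_sub, eval_mul, eval_ofNat, eval_X]
    ring

lemma Hc_eq_eval_physHermite (n : ℕ) (z : ℂ) : Hc n z = (physHermite ℂ n).eval z := by
  have exp_cancel : Complex.exp (z ^ 2) * Complex.exp (-z ^ 2) = 1 := by
    rw [← Complex.exp_add, add_neg_cancel, Complex.exp_zero]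
  have sign_cancel : (-1 : ℂ) ^ n * (-1) ^ n = 1 := by rw [← mul_pow]; simp
  rw [Hc, iteratedDeriv_cexp_neg_sq]
  linear_combination (physHermite ℂ n).eval z * (-1) ^ n * (-1) ^ n * exp_cancel +
    (physHermite ℂ n).eval z * sign_cancel

lemma Hhatc_eq_eval_hatHermite (n : ℕ) (z : ℂ) : Hhatc n z = (hatHermite ℂ n).eval z := by
  simp [Hhatc, hatHermite, Hc_eq_eval_physHermite]

end Rodrigues

lemma sub_two_mul_factorial_mul_ceven (n k : ℕ) :
    ((n : ℂ) - 2) * ((2 * k).factorial : ℂ) * ceven n k =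
      ((n : ℂ) - ((2 * (k : ℂ) - 1) ^ 2 + 1)) * (-2) ^ k * ∏ i ∈ range k, ((n : ℂ) - 2 * i) := by
  rcases k with _ | _ | k
  · norm_num [ceven]
  · norm_num [ceven]
  · have factorial_ne_zero : ((2 * (k + 1 + 1)).factorial : ℂ) ≠ 0 :=
      mod_cast Nat.factorial_ne_zero _
    rw [prod_range_add_two_sub_two_mul, ceven, if_neg (by omega), if_neg (by omega),
      show k + 1 + 1 - 2 = k by omega, ← neg_one_mul 2, mul_pow]
    field_simp

lemma coeff_hatHermite_two_mul {n : ℕ} (hn₁ : n ≠ 1) (hn₂ : n ≠ 2) (k : ℕ) :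
    (hatHermite ℂ n).coeff (2 * k) =
      -(physHermite ℂ n).coeff 0 / ((n : ℂ) - 1) * ceven n k := by
  have sub_one_ne_zero : (n : ℂ) - 1 ≠ 0 := sub_ne_zero.mpr (mod_cast hn₁)
  have sub_two_ne_zero : (n : ℂ) - 2 ≠ 0 := sub_ne_zero.mpr (mod_cast hn₂)
  have factorial_ne_zero : ((2 * k).factorial : ℂ) ≠ 0 := mod_cast Nat.factorial_ne_zero _
  have hat := mul_coeff_hatHermite (R := ℂ) n (2 * k)
  have closed_form := factorial_mul_coeff_physHermite_two_mul (R := ℂ) n k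
  have series := sub_two_mul_factorial_mul_ceven n k
  rw [div_mul_eq_mul_div, eq_div_iff sub_one_ne_zero]
  apply mul_left_cancel₀ (mul_ne_zero sub_two_ne_zero factorial_ne_zero)
  push_cast at hat
  linear_combination ((2 * k).factorial : ℂ) * hat +
    ((2 * (k : ℂ) - 1) ^ 2 + 1 - n) * closed_form + (physHermite ℂ n).coeff 0 * series

lemma M2_eq_neg_coeff_zero_div {n : ℕ} (hn : Even n) (hn₂ : n ≠ 2) :
    M2 n = -(physHermite ℂ n).coeff 0 / ((n : ℂ) - 1) := by
  obtain ⟨m, rfl⟩ := even_iff_exists_two_mul.mp hn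
  rcases m with _ | _ | m
  · simp [M2, physHermite_zero]
  · simp at hn₂
  · set x : ℂ := ((2 * (m + 2) : ℕ) : ℂ) with hx
    have denominator : x * (x - 1) * (x - 2) * ∏ j ∈ Icc 1 m, (x - 2 * (1 + (j : ℂ))) =
        (x - 1) * (2 ^ (m + 2) * ((m + 2).factorial : ℂ)) := by
      rw [← prod_range_two_mul_sub_two_mul, ← Nat.cast_ofNat (n := 2), ← Nat.cast_mul, ← hx,
        Nat.cast_ofNat, prod_range_add_two_sub_two_mul]
      ring
    have value := factorial_mul_coeff_zero_physHermite_two_mul (R := ℂ) (m + 2)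
    have factorial_ne_zero : ((m + 2).factorial : ℂ) ≠ 0 := mod_cast Nat.factorial_ne_zero _
    rw [M2, if_neg (by omega), show (2 * (m + 2) + 2) / 2 = m + 3 by omega,
      show 2 * (m + 2) / 2 = m + 2 by omega, show (2 * (m + 2) - 4) / 2 = m by omega, ← hx,
      denominator, eq_div_of_mul_eq factorial_ne_zero ((mul_comm _ _).trans value)]
    field_simp
    ring

theorem stmt13 (n : ℕ) (hn : n = 0 ∨ (Even n ∧ 4 ≤ n)) (z : ℂ) :
    Hhatc n z = M2 n * muF n z := by
  have hEven : Even n := by grind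
  have hn₂ : n ≠ 2 := by omega
  have hn₁ : n ≠ 1 := by grind
  calc Hhatc n z = (hatHermite ℂ n).eval z := Hhatc_eq_eval_hatHermite n z
    _ = ∑' k : ℕ, (hatHermite ℂ n).coeff (2 * k) * z ^ (2 * k) :=
      eval_eq_tsum_coeff_two_mul (fun _ ↦ coeff_hatHermite_eq_zero_of_even_of_odd hEven) z
    _ = ∑' k : ℕ, M2 n * (ceven n k * z ^ (2 * k)) := by
      simp only [coeff_hatHermite_two_mul hn₁ hn₂, M2_eq_neg_coeff_zero_div hEven hn₂, mul_assoc]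
    _ = M2 n * muF n z := tsum_mul_left
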